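/- Let X be a nonempty set, b ≥ 1, ρ ≥ 0, and let d be a b-suprametric on X such that (X,d) is complete. Let f : X → X and suppose there exists a Matkowski function ψ satisfying additionally limsup_{n→∞} ψ^{n+1}(t)/ψⁿ(t) < 1/b for every t > 0, and such that d(f x, f y) ≤ ψ(d(x,y)) for all x, y ∈ X. Then f has a unique fixed point x⋆ in X, and for every x₀ ∈ X the Picard iterates satisfy d(fⁿ x₀, x⋆) → 0 as n → ∞. -/

import Mathlib

/-!
A `b`-suprametric is regular: `d x y` is small as soon as `d x z` and `d z y` are. Regularity makes
limits unique and replaces the triangle inequality in the proof that orbits are Cauchy. Given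
`ε > 0`, choose `k` such that `ψ^[k] ε` is small. Once `z` lies so far along an orbit that
`d z (f^[k] z)` is small, `f^[k]` maps the ball of radius `ε` around `z` into itself. Farther along,
the points `z, f z, …, f^[k - 1] z` also lie in that ball, and then so does the whole orbit of `z`.
-/

open Filter Function Set Topology

section

variable {X : Type*} {d : X → X → ℝ} {ψ : ℝ → ℝ} {f : X → X}

/-- A semimetric: a metric without the triangle inequality. -/
structure IsSemimetric (d : X → X → ℝ) : Prop where
  nonneg : ∀ x y, 0 ≤ d x y
  eq_zero_iff : ∀ x y, d x y = 0 ↔ x = y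
  symm : ∀ x y, d x y = d y x

/-- A regular semimetric, in which the triangle inequality is replaced by its uniform qualitative
form. -/
structure IsRegularSemimetric (d : X → X → ℝ) : Prop extends IsSemimetric d where
  exists_pos_forall_lt : ∀ ε > 0, ∃ δ > 0, ∀ x y z, d x z < δ → d z y < δ → d x y < ε

/-- A `b`-suprametric, with arbitrary real parameters `b` and `ρ`. -/
structure IsBSuprametric (b ρ : ℝ) (d : X → X → ℝ) : Prop extends IsSemimetric d where
  triangle : ∀ x y z, d x y ≤ b * (d x z + d z y) + ρ * d x z * d z y

/-- Completeness of `X` under `d`, for sequences. -/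
def IsSemimetricComplete (d : X → X → ℝ) : Prop :=
  ∀ u : ℕ → X, Tendsto (fun pq : ℕ × ℕ => d (u pq.1) (u pq.2)) atTop (𝓝 0) →
    ∃ x, Tendsto (fun n => d (u n) x) atTop (𝓝 0)

/-- A Matkowski function on `[0, ∞)`, encoded as a real function of which only the restriction to
`[0, ∞)` matters. -/
structure IsMatkowski (ψ : ℝ → ℝ) : Prop where
  nonneg : ∀ t, 0 ≤ t → 0 ≤ ψ t
  monotoneOn : MonotoneOn ψ (Ici 0)
  tendsto_iterate_of_pos : ∀ t, 0 < t → Tendsto (fun n => ψ^[n] t) atTop (𝓝 0)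

theorem iterate_mem_of_mapsTo_iterate {α : Type*} {g : α → α} {s : Set α} {k : ℕ} {z : α}
    (hk : 0 < k) (hs : MapsTo g^[k] s s) (hz : ∀ r < k, g^[r] z ∈ s) (m : ℕ) : g^[m] z ∈ s := by
  rw [← Nat.div_add_mod m k, iterate_add_apply, iterate_mul]
  exact hs.iterate (m / k) (hz _ (Nat.mod_lt m hk))

namespace IsMatkowski

theorem map_lt_self (hψ : IsMatkowski ψ) {t : ℝ} (ht : 0 < t) : ψ t < t := by
  by_contra! h
  have le_iterate (n : ℕ) : t ≤ ψ^[n] t := by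
    induction n with
    | zero => rfl
    | succ n ih =>
      rw [iterate_succ_apply']
      exact h.trans (hψ.monotoneOn ht.le (ht.le.trans ih) ih)
  exact ht.not_ge (ge_of_tendsto' (hψ.tendsto_iterate_of_pos t ht) le_iterate)

theorem map_zero (hψ : IsMatkowski ψ) : ψ 0 = 0 := by
  by_contra h
  have hpos : 0 < ψ 0 := (hψ.nonneg 0 le_rfl).lt_of_ne' h
  exact (hψ.map_lt_self hpos).not_ge (hψ.monotoneOn self_mem_Ici hpos.le hpos.le)

theorem map_le_self (hψ : IsMatkowski ψ) {t : ℝ} (ht : 0 ≤ t) : ψ t ≤ t := by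
  obtain rfl | ht := ht.eq_or_lt
  · exact hψ.map_zero.le
  · exact (hψ.map_lt_self ht).le

theorem mapsTo_iterate (hψ : IsMatkowski ψ) (n : ℕ) : MapsTo ψ^[n] (Ici 0) (Ici 0) :=
  MapsTo.iterate hψ.nonneg n

theorem monotoneOn_iterate (hψ : IsMatkowski ψ) (n : ℕ) : MonotoneOn ψ^[n] (Ici 0) := by
  induction n with
  | zero => exact monotoneOn_id
  | succ n ih =>
    rw [iterate_succ']
    exact hψ.monotoneOn.comp ih (hψ.mapsTo_iterate n)

theorem tendsto_iterate (hψ : IsMatkowski ψ) {t : ℝ} (ht : 0 ≤ t) :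
    Tendsto (fun n => ψ^[n] t) atTop (𝓝 0) := by
  obtain rfl | ht := ht.eq_or_lt
  · simp only [iterate_fixed hψ.map_zero, tendsto_const_nhds]
  · exact hψ.tendsto_iterate_of_pos t ht

end IsMatkowski

theorem IsBSuprametric.isRegularSemimetric {b ρ : ℝ} (hd : IsBSuprametric b ρ d) :
    IsRegularSemimetric d where
  toIsSemimetric := hd.toIsSemimetric
  exists_pos_forall_lt ε hε := by
    have hbound : Tendsto (fun p : ℝ × ℝ => b * (p.1 + p.2) + ρ * p.1 * p.2) (𝓝 0) (𝓝 0) :=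
      Continuous.tendsto' (by fun_prop) _ _ (by simp)
    obtain ⟨δ, hδ, hball⟩ := Metric.eventually_nhds_iff.1 (hbound.eventually_lt_const hε)
    refine ⟨δ, hδ, fun x y z hxz hzy => (hd.triangle x y z).trans_lt (@hball (d x z, d z y) ?_)⟩
    simpa [Prod.dist_eq, abs_of_nonneg (hd.nonneg _ _)] using ⟨hxz, hzy⟩

namespace IsSemimetric

theorem dist_iterate_le (hd : IsSemimetric d) (hψ : IsMatkowski ψ)
    (hf : ∀ x y, d (f x) (f y) ≤ ψ (d x y)) (n : ℕ) (x y : X) :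
    d (f^[n] x) (f^[n] y) ≤ ψ^[n] (d x y) := by
  induction n with
  | zero => rfl
  | succ n ih =>
    simp only [iterate_succ_apply']
    exact (hf _ _).trans
      (hψ.monotoneOn (hd.nonneg _ _) (hψ.mapsTo_iterate n (hd.nonneg x y)) ih)

theorem tendsto_dist_iterate (hd : IsSemimetric d) (hψ : IsMatkowski ψ)
    (hf : ∀ x y, d (f x) (f y) ≤ ψ (d x y)) (x y : X) :
    Tendsto (fun n => d (f^[n] x) (f^[n] y)) atTop (𝓝 0) :=
  squeeze_zero (fun _ => hd.nonneg _ _) (fun n => hd.dist_iterate_le hψ hf n x y)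
    (hψ.tendsto_iterate (hd.nonneg x y))

theorem tendsto_dist_iterate_of_isFixedPt (hd : IsSemimetric d) (hψ : IsMatkowski ψ)
    (hf : ∀ x y, d (f x) (f y) ≤ ψ (d x y)) {y : X} (hy : IsFixedPt f y) (x : X) :
    Tendsto (fun n => d (f^[n] x) y) atTop (𝓝 0) := by
  simpa only [iterate_fixed hy] using hd.tendsto_dist_iterate hψ hf x y

theorem eq_of_isFixedPt (hd : IsSemimetric d) (hψ : IsMatkowski ψ)
    (hf : ∀ x y, d (f x) (f y) ≤ ψ (d x y)) {x y : X} (hx : IsFixedPt f x) (hy : IsFixedPt f y) :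
    x = y := by
  have hlim := hd.tendsto_dist_iterate_of_isFixedPt hψ hf hy x
  simp only [iterate_fixed hx] at hlim
  exact (hd.eq_zero_iff x y).1 (tendsto_nhds_unique tendsto_const_nhds hlim)

end IsSemimetric

namespace IsRegularSemimetric

theorem eq_of_tendsto (hd : IsRegularSemimetric d) {ι : Type*} {l : Filter ι} [l.NeBot]
    {u : ι → X} {x y : X} (hx : Tendsto (fun i => d (u i) x) l (𝓝 0))
    (hy : Tendsto (fun i => d (u i) y) l (𝓝 0)) : x = y := by
  refine (hd.eq_zero_iff x y).1 ((hd.nonneg x y).antisymm' (le_of_forall_gt ?_))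
  intro ε hε
  obtain ⟨δ, hδ, htri⟩ := hd.exists_pos_forall_lt ε hε
  obtain ⟨i, hix, hiy⟩ := ((hx.eventually_lt_const hδ).and (hy.eventually_lt_const hδ)).exists
  exact htri x y (u i) (hd.symm x (u i) ▸ hix) hiy

theorem exists_mapsTo_iterate_ball (hd : IsRegularSemimetric d) (hψ : IsMatkowski ψ)
    (hf : ∀ x y, d (f x) (f y) ≤ ψ (d x y)) {ε : ℝ} (hε : 0 < ε) :
    ∃ k > 0, ∃ δ > 0, ∀ z, d z (f^[k] z) < δ →
      MapsTo f^[k] {y | d z y < ε} {y | d z y < ε} := by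
  obtain ⟨δ, hδ, htri⟩ := hd.exists_pos_forall_lt ε hε
  obtain ⟨k, hkδ, hk⟩ := (((hψ.tendsto_iterate hε.le).eventually_lt_const hδ).and
    (eventually_gt_atTop 0)).exists
  refine ⟨k, hk, δ, hδ, fun z hz y hy => htri z (f^[k] y) (f^[k] z) hz ?_⟩
  calc d (f^[k] z) (f^[k] y) ≤ ψ^[k] (d z y) := hd.dist_iterate_le hψ hf k z y
    _ ≤ ψ^[k] ε := hψ.monotoneOn_iterate k (hd.nonneg z y) hε.le hy.le
    _ < δ := hkδ

theorem eventually_forall_dist_iterate_lt (hd : IsRegularSemimetric d) (hψ : IsMatkowski ψ)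
    (hf : ∀ x y, d (f x) (f y) ≤ ψ (d x y)) (x : X) {ε : ℝ} (hε : 0 < ε) :
    ∀ᶠ n in atTop, ∀ m, d (f^[n] x) (f^[m] (f^[n] x)) < ε := by
  obtain ⟨k, hk, δ, hδ, hball⟩ := hd.exists_mapsTo_iterate_ball hψ hf hε
  have hshift (r : ℕ) : Tendsto (fun n => d (f^[n] x) (f^[r] (f^[n] x))) atTop (𝓝 0) := by
    simpa only [← iterate_add_apply, Nat.add_comm] using hd.tendsto_dist_iterate hψ hf x (f^[r] x)
  have hinitial : ∀ᶠ n in atTop, ∀ r < k, d (f^[n] x) (f^[r] (f^[n] x)) < ε :=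
    (eventually_all_finite (finite_lt_nat k)).2 fun r _ => (hshift r).eventually_lt_const hε
  filter_upwards [hinitial, (hshift k).eventually_lt_const hδ] with n hn hnk
  exact iterate_mem_of_mapsTo_iterate hk (hball _ hnk) hn

theorem tendsto_dist_iterate_prod (hd : IsRegularSemimetric d) (hψ : IsMatkowski ψ)
    (hf : ∀ x y, d (f x) (f y) ≤ ψ (d x y)) (x : X) :
    Tendsto (fun pq : ℕ × ℕ => d (f^[pq.1] x) (f^[pq.2] x)) atTop (𝓝 0) := by
  refine tendsto_order.2 ⟨fun a ha => .of_forall fun _ => ha.trans_le (hd.nonneg _ _), ?_⟩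
  intro ε hε
  obtain ⟨N, hN⟩ := eventually_atTop.1 (hd.eventually_forall_dist_iterate_lt hψ hf x hε)
  have hlt {p q : ℕ} (hp : N ≤ p) (hpq : p ≤ q) : d (f^[p] x) (f^[q] x) < ε := by
    simpa only [← iterate_add_apply, Nat.sub_add_cancel hpq] using hN p hp (q - p)
  filter_upwards [Ici_mem_atTop (N, N)] with ⟨p, q⟩ ⟨hp, hq⟩
  obtain hpq | hqp := le_total p q
  · exact hlt hp hpq
  · exact hd.symm _ _ ▸ hlt hq hqp

theorem isFixedPt_of_tendsto_iterate (hd : IsRegularSemimetric d) (hψ : IsMatkowski ψ)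
    (hf : ∀ x y, d (f x) (f y) ≤ ψ (d x y)) {x y : X}
    (hxy : Tendsto (fun n => d (f^[n] x) y) atTop (𝓝 0)) : IsFixedPt f y := by
  have hsucc : Tendsto (fun n => d (f^[n + 1] x) (f y)) atTop (𝓝 0) := by
    refine squeeze_zero (fun _ => hd.nonneg _ _) (fun n => ?_) hxy
    rw [iterate_succ_apply']
    exact (hf _ _).trans (hψ.map_le_self (hd.nonneg _ _))
  exact hd.eq_of_tendsto hsucc (hxy.comp (tendsto_add_atTop_nat 1))

end IsRegularSemimetric

theorem b_suprametric_matkowski_b_fixed_point_general [Nonempty X]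
    (hd : IsRegularSemimetric d) (hcomplete : IsSemimetricComplete d) (hψ : IsMatkowski ψ)
    (hf : ∀ x y, d (f x) (f y) ≤ ψ (d x y)) :
    ∃ xs : X, f xs = xs ∧ (∀ y, f y = y → y = xs) ∧
      ∀ x₀ : X, Tendsto (fun n => d (f^[n] x₀) xs) atTop (𝓝 0) := by
  obtain ⟨x⟩ := ‹Nonempty X›
  obtain ⟨xs, hxs⟩ := hcomplete (fun n => f^[n] x) (hd.tendsto_dist_iterate_prod hψ hf x)
  have hfix : IsFixedPt f xs := hd.isFixedPt_of_tendsto_iterate hψ hf hxs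
  exact ⟨xs, hfix, fun y hy => hd.eq_of_isFixedPt hψ hf hy hfix,
    hd.tendsto_dist_iterate_of_isFixedPt hψ hf hfix⟩

end

/-- **Theorem.** Let `X` be a nonempty set, `b ≥ 1`, `ρ ≥ 0`, and `d` a complete
`b`-suprametric on `X`. If `f : X → X` satisfies `d (f x) (f y) ≤ ψ (d x y)` for a
Matkowski function `ψ` that additionally satisfies
`limsup_n ψ^[n+1] t / ψ^[n] t < 1/b` for all `t > 0`, then `f` has a unique fixed
point and every Picard iteration converges to it. -/
theorem b_suprametric_matkowski_b_fixed_point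
    {X : Type*} [Nonempty X] (b ρ : ℝ) (hb : 1 ≤ b) (hρ : 0 ≤ ρ)
    (d : X → X → ℝ)
    (hd_nonneg : ∀ x y, 0 ≤ d x y)
    (hd_eq : ∀ x y, d x y = 0 ↔ x = y)
    (hd_symm : ∀ x y, d x y = d y x)
    (hd_tri : ∀ x y z, d x y ≤ b * (d x z + d z y) + ρ * d x z * d z y)
    (hd_complete : ∀ u : ℕ → X,
      Filter.Tendsto (fun pq : ℕ × ℕ => d (u pq.1) (u pq.2)) Filter.atTop (nhds 0) →
      ∃ x : X, Filter.Tendsto (fun n => d (u n) x) Filter.atTop (nhds 0))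
    (f : X → X) (ψ : ℝ → ℝ)
    (hψ_nonneg : ∀ t, 0 ≤ t → 0 ≤ ψ t)
    (hψ_mono : MonotoneOn ψ (Set.Ici 0))
    (hψ_iter : ∀ t, 0 < t →
      Filter.Tendsto (fun n => ψ^[n] t) Filter.atTop (nhds 0))
    (hψ_ratio : ∀ t, 0 < t →
      Filter.limsup (fun n => ψ^[n + 1] t / ψ^[n] t) Filter.atTop < 1 / b)
    (h_contr : ∀ x y, d (f x) (f y) ≤ ψ (d x y)) :
    ∃ xs : X, f xs = xs ∧ (∀ y, f y = y → y = xs) ∧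
      ∀ x₀ : X, Filter.Tendsto (fun n => d (f^[n] x₀) xs) Filter.atTop (nhds 0) :=
  b_suprametric_matkowski_b_fixed_point_general
    (IsBSuprametric.isRegularSemimetric ⟨⟨hd_nonneg, hd_eq, hd_symm⟩, hd_tri⟩) hd_complete
    ⟨hψ_nonneg, hψ_mono, hψ_iter⟩ h_contr
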